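/- Epi-convergence of expectation functions under varying measures and integrands (Feinberg–Kasyanov–Liang): Let 𝒳 ⊆ ℝⁿ and Ξ ⊆ ℝᵐ be closed, let 𝐏, 𝐏_ν (ν ∈ ℕ) be Borel probability measures on Ξ with 𝐏_ν converging weakly to 𝐏, and let f, f_ν : 𝒳 × Ξ → ℝ̄ be such that for each x̄ ∈ 𝒳: (i) f(x̄,·) and each f_ν(x̄,·) are Borel measurable; (ii) liminf_{α→−∞} liminf_{(ν,x)→(∞,x̄)} ∫_Ξ f_ν(x,ξ) 1{f_ν(x,ξ) ≤ α} d𝐏_ν(ξ) = 0, and for 𝐏-almost every ξ̄ ∈ Ξ, liminf_{(ν,x,ξ)→(∞,x̄,ξ̄)} f_ν(x,ξ) ≥ f(x̄,ξ̄); (iii) there exists a sequence x_ν ∈ 𝒳 with x_ν → x̄ such that limsup_{α→∞} limsup_{ν→∞} ∫_Ξ f_ν(x_ν,ξ) 1{f_ν(x_ν,ξ) ≥ α} d𝐏_ν(ξ) = 0, and for 𝐏-almost every ξ̄ ∈ Ξ, limsup_{(ν,ξ)→(∞,ξ̄)} f_ν(x_ν,ξ) ≤ f(x̄,ξ̄).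 Then the expectation functions x ↦ ∫_Ξ f_ν(x,ξ) d𝐏_ν(ξ) epi-converge to x ↦ ∫_Ξ f(x,ξ) d𝐏(ξ) on 𝒳. -/

import Mathlib

/-!
If `h n y` stays above `c` as `(n, y) → (∞, x)`, then `x` lies in the interior of
`⋂ n ≥ N, {c < h n}` for some `N`. The portmanteau inequality for open sets therefore bounds the
measures of superlevel sets, and the layer-cake formula together with the classical Fatou lemma in
the level variable gives Fatou's lemma for nonnegative integrands under weakly converging measures.

Subtracting a constant extends this to integrands that are uniformly bounded below. In general,
`max G α + G·1{G ≤ α} ≤ G` for `α ≤ 0`, and the integral is superadditive, so that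
`∫ g + liminf ∫ Gₙ·1{Gₙ ≤ α} ≤ liminf ∫ Gₙ`; the truncated term vanishes as `α → -∞`. Dually,
`G - G·1{G ≥ α} ≤ min G α` for `α ≥ 0` gives the upper bound along the recovery sequence.
-/

open Filter MeasureTheory Topology Set

noncomputable section

/-- Extended-real to extended-nonnegative-real (positive part). -/
def erealToENN (x : EReal) : ENNReal := if x = ⊤ then ⊤ else ENNReal.ofReal x.toReal

/-- Integral of an extended-real-valued function. -/
def eintegral {Ω : Type*} [MeasurableSpace Ω] (P : Measure Ω) (g : Ω → EReal) : EReal :=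
  ((∫⁻ ω, erealToENN (g ω) ∂P : ENNReal) : EReal) -
    ((∫⁻ ω, erealToENN (-(g ω)) ∂P : ENNReal) : EReal)

/-- g·1{g ≤ α}. -/
def truncBelow {Ω : Type*} (g : Ω → EReal) (α : ℝ) (ω : Ω) : EReal :=
  if g ω ≤ (α : EReal) then g ω else 0

/-- g·1{g ≥ α}. -/
def truncAbove {Ω : Type*} (g : Ω → EReal) (α : ℝ) (ω : Ω) : EReal :=
  if (α : EReal) ≤ g ω then g ω else 0

/-- Epi-convergence of a sequence of extended-real-valued functions on a set `Z`. -/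
def EpiConvergesOn {E : Type*} [TopologicalSpace E] (Z : Set E)
    (F : ℕ → E → EReal) (f : E → EReal) : Prop :=
  ∀ z ∈ Z,
    (∀ zs : ℕ → E, (∀ ν, zs ν ∈ Z) → Tendsto zs atTop (𝓝 z) →
      f z ≤ liminf (fun ν => F ν (zs ν)) atTop) ∧
    (∃ zs : ℕ → E, (∀ ν, zs ν ∈ Z) ∧ Tendsto zs atTop (𝓝 z) ∧
      limsup (fun ν => F ν (zs ν)) atTop ≤ f z)

/-- Iterated lower limit as `(ν, x) → (∞, x̄)` with `x` ranging over `X`. -/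
def liminfNuX {E : Type*} [PseudoMetricSpace E] (X : Set E) (xb : E)
    (h : ℕ → E → EReal) : EReal :=
  ⨆ (δ : ℝ) (_ : 0 < δ) (ν' : ℕ),
    ⨅ (ν : ℕ) (_ : ν' ≤ ν) (x : E) (_ : x ∈ X) (_ : dist x xb ≤ δ), h ν x

/-- Iterated lower limit as `(ν, x, ξ) → (∞, x̄, ξ̄)`. -/
def liminfNuXXi {E Ξ' : Type*} [PseudoMetricSpace E] [PseudoMetricSpace Ξ'] (X : Set E)
    (xb : E) (ξb : Ξ') (h : ℕ → E → Ξ' → EReal) : EReal :=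
  ⨆ (δ : ℝ) (_ : 0 < δ) (ν' : ℕ),
    ⨅ (ν : ℕ) (_ : ν' ≤ ν) (x : E) (_ : x ∈ X) (_ : dist x xb ≤ δ)
      (ξ : Ξ') (_ : dist ξ ξb ≤ δ), h ν x ξ

/-- Iterated upper limit as `(ν, ξ) → (∞, ξ̄)`. -/
def limsupNuXi {Ξ' : Type*} [PseudoMetricSpace Ξ'] (ξb : Ξ') (h : ℕ → Ξ' → EReal) : EReal :=
  ⨅ (δ : ℝ) (_ : 0 < δ) (ν' : ℕ),
    ⨆ (ν : ℕ) (_ : ν' ≤ ν) (ξ : Ξ') (_ : dist ξ ξb ≤ δ), h ν ξ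

/-- Upper limit as `ν → ∞`. -/
def limsupNu (h : ℕ → EReal) : EReal := ⨅ (ν' : ℕ), ⨆ (ν : ℕ) (_ : ν' ≤ ν), h ν

/-- Lower limit as `α → −∞`. -/
def liminfAlphaBot (G : ℝ → EReal) : EReal := ⨆ (αb : ℝ), ⨅ (α : ℝ) (_ : α ≤ αb), G α

/-- Upper limit as `α → ∞`. -/
def limsupAlphaTop (G : ℝ → EReal) : EReal := ⨅ (αb : ℝ), ⨆ (α : ℝ) (_ : αb ≤ α), G α

/-- Weak convergence of measures: integrals of bounded continuous functions converge. -/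
def WeakConv {Ω : Type*} [TopologicalSpace Ω] [MeasurableSpace Ω]
    (Pν : ℕ → Measure Ω) (P : Measure Ω) : Prop :=
  ∀ h : Ω → ℝ, Continuous h → (∃ C : ℝ, ∀ ω, |h ω| ≤ C) →
    Tendsto (fun ν => ∫ ω, h ω ∂(Pν ν)) atTop (𝓝 (∫ ω, h ω ∂P))

/-! ### Iterated limits as filter limits -/

section FilterLimits

variable {E Ω : Type*} [PseudoMetricSpace E] [PseudoMetricSpace Ω]

lemma liminfNuX_eq_liminf (X : Set E) (x : E) (h : ℕ → E → EReal) :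
    liminfNuX X x h = liminf (fun p : ℕ × E => h p.1 p.2) (atTop ×ˢ 𝓝[X] x) := by
  rw [(atTop_basis.prod (nhdsWithin_hasBasis Metric.nhds_basis_closedBall X)).liminf_eq_iSup_iInf]
  simp only [liminfNuX, iSup_prod, iInf_prod, mem_prod, mem_inter_iff, mem_Ici,
    Metric.mem_closedBall, true_and, iInf_and]
  refine (iSup_comm.trans <| iSup_congr fun δ => iSup_comm.trans <| iSup_congr fun _ =>
    iSup_congr fun N => iInf_congr fun n => ?_).symm
  exact iInf_comm.trans (iInf_congr fun _ => iInf_congr fun y => iInf_comm)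

lemma liminfNuXXi_eq_liminfNuX (X : Set E) (x : E) (ξ : Ω) (h : ℕ → E → Ω → EReal) :
    liminfNuXXi X x ξ h = liminfNuX (X ×ˢ univ) (x, ξ) (fun n p => h n p.1 p.2) := by
  simp only [liminfNuXXi, liminfNuX, iInf_prod, mem_prod, mem_univ, and_true, Prod.dist_eq,
    max_le_iff, iInf_and]
  refine iSup_congr fun δ => iSup_congr fun _ => iSup_congr fun N => iInf_congr fun n =>
    iInf_congr fun _ => iInf_congr fun y => ?_
  exact (iInf_comm.trans <| iInf_congr fun _ => iInf_comm).symm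

lemma limsupNuXi_eq_limsup (ξ : Ω) (h : ℕ → Ω → EReal) :
    limsupNuXi ξ h = limsup (fun p : ℕ × Ω => h p.1 p.2) (atTop ×ˢ 𝓝 ξ) := by
  rw [(atTop_basis.prod Metric.nhds_basis_closedBall).limsup_eq_iInf_iSup]
  simp only [limsupNuXi, iSup_prod, iInf_prod, mem_prod, mem_Ici,
    Metric.mem_closedBall, true_and, iSup_and]
  refine (iInf_comm.trans <| iInf_congr fun δ => iInf_comm.trans <| iInf_congr fun _ =>
    iInf_congr fun N => iSup_congr fun n => ?_).symm
  exact iSup_comm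

variable {X : Set E} {x : E} {xs : ℕ → E}

lemma liminfNuX_le_liminf (hxs : ∀ n, xs n ∈ X) (hlim : Tendsto xs atTop (𝓝 x))
    (h : ℕ → E → EReal) : liminfNuX X x h ≤ liminf (fun n => h n (xs n)) atTop := by
  have h_along : Tendsto (fun n => (n, xs n)) atTop (atTop ×ˢ 𝓝[X] x) :=
    tendsto_id.prodMk (tendsto_nhdsWithin_iff.2 ⟨hlim, .of_forall hxs⟩)
  exact (liminfNuX_eq_liminf X x h).trans_le (liminf_le_liminf_of_le h_along)

lemma liminfNuXXi_le_liminf (hxs : ∀ n, xs n ∈ X) (hlim : Tendsto xs atTop (𝓝 x)) (ξ : Ω)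
    (h : ℕ → E → Ω → EReal) :
    liminfNuXXi X x ξ h ≤ liminf (fun p : ℕ × Ω => h p.1 (xs p.1) p.2) (atTop ×ˢ 𝓝 ξ) := by
  have h_along : Tendsto (fun p : ℕ × Ω => (p.1, (xs p.1, p.2))) (atTop ×ˢ 𝓝 ξ)
      (atTop ×ˢ 𝓝[X ×ˢ univ] (x, ξ)) := by
    rw [nhdsWithin_prod_eq, nhdsWithin_univ]
    exact tendsto_fst.prodMk (((tendsto_nhdsWithin_iff.2 ⟨hlim, .of_forall hxs⟩).comp
      tendsto_fst).prodMk tendsto_snd)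
  rw [liminfNuXXi_eq_liminfNuX, liminfNuX_eq_liminf]
  exact liminf_le_liminf_of_le h_along

end FilterLimits

lemma limsupNu_eq_limsup (h : ℕ → EReal) : limsupNu h = limsup h atTop :=
  limsup_eq_iInf_iSup_of_nat.symm

lemma liminfAlphaBot_eq_liminf (G : ℝ → EReal) : liminfAlphaBot G = liminf G atBot := by
  simp only [liminfAlphaBot, atBot_basis.liminf_eq_iSup_iInf, mem_Iic, iSup_true]

lemma limsupAlphaTop_eq_limsup (G : ℝ → EReal) : limsupAlphaTop G = limsup G atTop := by
  simp only [limsupAlphaTop, atTop_basis.limsup_eq_iInf_iSup, mem_Ici, iInf_true]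

/-! ### Fatou's lemma under weak convergence -/

lemma lintegral_eq_lintegral_meas_ofReal_lt {Ω : Type*} [MeasurableSpace Ω]
    (μ : Measure Ω) {g : Ω → ENNReal} (hg : AEMeasurable g μ) :
    ∫⁻ x, g x ∂μ = ∫⁻ t in Ioi (0 : ℝ), μ {x | ENNReal.ofReal t < g x} := by
  by_cases hfin : ∀ᵐ x ∂μ, g x ≠ ⊤
  · calc ∫⁻ x, g x ∂μ = ∫⁻ x, ENNReal.ofReal (g x).toReal ∂μ :=
          lintegral_congr_ae (hfin.mono fun x hx => (ENNReal.ofReal_toReal hx).symm)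
      _ = ∫⁻ t in Ioi (0 : ℝ), μ {x | t < (g x).toReal} :=
          lintegral_eq_lintegral_meas_lt μ (ae_of_all _ fun _ => ENNReal.toReal_nonneg)
            hg.ennreal_toReal
      _ = ∫⁻ t in Ioi (0 : ℝ), μ {x | ENNReal.ofReal t < g x} :=
          setLIntegral_congr_fun measurableSet_Ioi fun t ht => measure_congr <|
            hfin.mono fun x hx => propext (ENNReal.ofReal_lt_iff_lt_toReal (le_of_lt ht) hx).symm
  · have htop : μ {x | g x = ⊤} ≠ 0 := by simpa [ae_iff] using hfin
    have hlevel : ∫⁻ _ in Ioi (0 : ℝ), μ {x | g x = ⊤} = ⊤ := by simp [ENNReal.mul_top htop]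
    rw [lintegral_eq_top_of_measure_eq_top_ne_zero hg htop, eq_comm, eq_top_iff, ← hlevel]
    exact lintegral_mono fun t => measure_mono fun x (hx : g x = ⊤) =>
      ENNReal.ofReal_lt_top.trans_eq hx.symm

section Fatou

variable {Ω : Type*} [TopologicalSpace Ω] [MeasurableSpace Ω]

lemma WeakConv.measure_isOpen_le_liminf [OpensMeasurableSpace Ω] [HasOuterApproxClosed Ω]
    {μ : Measure Ω} {μs : ℕ → Measure Ω} [hμ : IsProbabilityMeasure μ]
    [hμs : ∀ n, IsProbabilityMeasure (μs n)] (hweak : WeakConv μs μ) {U : Set Ω}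
    (hU : IsOpen U) :
    μ U ≤ liminf (fun n => μs n U) atTop := by
  have h : Tendsto (β := ProbabilityMeasure Ω) (fun n => ⟨μs n, hμs n⟩) atTop (𝓝 ⟨μ, hμ⟩) :=
    ProbabilityMeasure.tendsto_iff_forall_integral_tendsto.2 fun φ =>
      hweak φ φ.continuous ⟨‖φ‖, φ.norm_coe_le_norm⟩
  exact ProbabilityMeasure.le_liminf_measure_open_of_tendsto h hU

variable {μ : Measure Ω} {μs : ℕ → Measure Ω}

lemma measure_le_liminf_of_ae_eventually_mem
    (hopen : ∀ U, IsOpen U → μ U ≤ liminf (fun n => μs n U) atTop) {s : Set Ω} {t : ℕ → Set Ω}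
    (hst : ∀ᵐ x ∂μ, x ∈ s → ∀ᶠ p in atTop ×ˢ 𝓝 x, p.2 ∈ t p.1) :
    μ s ≤ liminf (fun n => μs n (t n)) atTop := by
  let U : ℕ → Set Ω := fun N => interior (⋂ n ≥ N, t n)
  have hU_mono : Monotone U := fun _ _ hNM =>
    interior_mono (biInter_mono (fun _ hn => hNM.trans hn) fun _ _ => Subset.rfl)
  have hs_cover : s ≤ᵐ[μ] ⋃ N, U N := by
    filter_upwards [hst] with x hx hxs
    obtain ⟨p, hp, q, hq, hpq⟩ := eventually_prod_iff.1 (hx hxs)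
    obtain ⟨N, hN⟩ := eventually_atTop.1 hp
    exact mem_iUnion.2 ⟨N, mem_interior_iff_mem_nhds.2
      (hq.mono fun y hy => mem_iInter₂.2 fun n hn => hpq (hN n hn) hy)⟩
  have hU_le (N : ℕ) : μ (U N) ≤ liminf (fun n => μs n (t n)) atTop :=
    (hopen _ isOpen_interior).trans <| liminf_le_liminf <|
      (eventually_ge_atTop N).mono fun n hn =>
        measure_mono (interior_subset.trans (biInter_subset_of_mem hn))
  calc μ s ≤ μ (⋃ N, U N) := measure_mono_ae hs_cover
    _ = ⨆ N, μ (U N) := hU_mono.measure_iUnion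
    _ ≤ _ := iSup_le hU_le

theorem lintegral_le_liminf_lintegral
    (hopen : ∀ U, IsOpen U → μ U ≤ liminf (fun n => μs n U) atTop)
    {g : Ω → ENNReal} {h : ℕ → Ω → ENNReal} (hh : ∀ n, AEMeasurable (h n) (μs n))
    (hlim : ∀ᵐ x ∂μ, g x ≤ liminf (fun p => h p.1 p.2) (atTop ×ˢ 𝓝 x)) :
    ∫⁻ x, g x ∂μ ≤ liminf (fun n => ∫⁻ x, h n x ∂(μs n)) atTop := by
  obtain ⟨g', hg', hg'_le, hg'_eq⟩ := exists_measurable_le_lintegral_eq μ g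
  have hlevel (c : ENNReal) :
      μ {x | c < g' x} ≤ liminf (fun n => μs n {x | c < h n x}) atTop :=
    measure_le_liminf_of_ae_eventually_mem hopen <| hlim.mono fun x hx hc =>
      eventually_lt_of_lt_liminf ((lt_of_lt_of_le hc (hg'_le x)).trans_le hx)
  have hmeas (n : ℕ) : Measurable fun t : ℝ => μs n {x | ENNReal.ofReal t < h n x} :=
    Antitone.measurable fun _ _ hst => measure_mono fun _ hx =>
      (ENNReal.ofReal_le_ofReal hst).trans_lt hx
  calc ∫⁻ x, g x ∂μ = ∫⁻ t in Ioi (0 : ℝ), μ {x | ENNReal.ofReal t < g' x} := by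
        rw [hg'_eq, lintegral_eq_lintegral_meas_ofReal_lt μ hg'.aemeasurable]
    _ ≤ ∫⁻ t in Ioi (0 : ℝ), liminf (fun n => μs n {x | ENNReal.ofReal t < h n x}) atTop :=
        lintegral_mono fun t => hlevel _
    _ ≤ liminf (fun n => ∫⁻ t in Ioi (0 : ℝ), μs n {x | ENNReal.ofReal t < h n x}) atTop :=
        lintegral_liminf_le hmeas
    _ = liminf (fun n => ∫⁻ x, h n x ∂(μs n)) atTop := by
        simp only [lintegral_eq_lintegral_meas_ofReal_lt _ (hh _)]

end Fatou

/-! ### Calculus of `eintegral` -/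

lemma toENNReal_add_add_toENNReal_neg_add (x y : EReal) :
    x.toENNReal + y.toENNReal + (-(x + y)).toENNReal =
      (x + y).toENNReal + ((-x).toENNReal + (-y).toENNReal) := by
  induction x with
  | bot => simp
  | top => induction y with
    | bot => simp
    | top => simp
    | coe y => simp
  | coe x => induction y with
    | bot => simp
    | top => simp
    | coe y =>
      simp only [← EReal.coe_add, ← EReal.coe_neg, EReal.real_coe_toENNReal, ENNReal.ofReal]
      norm_cast
      ext
      push_cast [Real.coe_toNNReal']
      linarith [max_zero_sub_eq_self x, max_zero_sub_eq_self y, max_zero_sub_eq_self (x + y)]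

lemma toENNReal_neg_add_le (x y : EReal) :
    (-(x + y)).toENNReal ≤ (-x).toENNReal + (-y).toENNReal := by
  induction x with
  | bot => simp
  | top => induction y <;> simp
  | coe x =>
    rw [EReal.neg_add (.inl (EReal.coe_ne_bot x)) (.inl (EReal.coe_ne_top x)), sub_eq_add_neg]
    exact EReal.toENNReal_add_le

lemma coe_sub_add_coe_sub_le {a a' b b' c c' : ENNReal} (h : a + b + c' = c + (a' + b'))
    (hc' : c' ≤ a' + b') : (a : EReal) - a' + (b - b') ≤ c - c' := by
  rcases eq_or_ne a' ⊤ with rfl | ha'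
  · simp
  rcases eq_or_ne b' ⊤ with rfl | hb'
  · simp
  lift c' to NNReal using ne_top_of_le_ne_top (by finiteness) hc'
  rcases eq_or_ne c ⊤ with rfl | hc
  · exact le_top.trans_eq (EReal.top_sub_coe c').symm
  have hab : a + b ≠ ⊤ := ne_top_of_le_ne_top (by finiteness) (le_self_add.trans_eq h)
  lift a to NNReal using (ENNReal.add_ne_top.1 hab).1
  lift b to NNReal using (ENNReal.add_ne_top.1 hab).2
  lift a' to NNReal using ha'
  lift b' to NNReal using hb'
  lift c to NNReal using hc
  have h_real : (a : ℝ) + b + c' = c + (a' + b') := by exact_mod_cast h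
  have h_sub : (a : ℝ) - a' + (b - b') ≤ c - c' := by linarith
  exact EReal.coe_le_coe_iff.2 h_sub

section EIntegral

variable {Ω : Type*} [MeasurableSpace Ω] {μ : Measure Ω} {g h : Ω → EReal}

lemma eintegral_eq_sub (μ : Measure Ω) (g : Ω → EReal) :
    eintegral μ g = ((∫⁻ x, (g x).toENNReal ∂μ : ENNReal) : EReal) -
      ((∫⁻ x, (-(g x)).toENNReal ∂μ : ENNReal) : EReal) := rfl

lemma eintegral_mono (hgh : ∀ x, g x ≤ h x) : eintegral μ g ≤ eintegral μ h :=
  EReal.sub_le_sub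
    (EReal.coe_ennreal_le_coe_ennreal_iff.2 <|
      lintegral_mono fun x => EReal.toENNReal_le_toENNReal (hgh x))
    (EReal.coe_ennreal_le_coe_ennreal_iff.2 <|
      lintegral_mono fun x => EReal.toENNReal_le_toENNReal (EReal.neg_le_neg_iff.2 (hgh x)))

lemma eintegral_of_nonneg (hg : ∀ x, 0 ≤ g x) :
    eintegral μ g = ((∫⁻ x, (g x).toENNReal ∂μ : ENNReal) : EReal) := by
  have hneg (x : Ω) : (-(g x)).toENNReal = 0 :=
    EReal.toENNReal_of_nonpos (EReal.neg_le_zero.2 (hg x))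
  simp [eintegral_eq_sub, hneg]

lemma eintegral_le_lintegral_toENNReal :
    eintegral μ g ≤ ((∫⁻ x, (g x).toENNReal ∂μ : ENNReal) : EReal) := by
  rw [eintegral_eq_sub]
  exact (EReal.sub_le_sub le_rfl (EReal.coe_ennreal_nonneg _)).trans_eq (sub_zero _)

lemma eintegral_const [IsProbabilityMeasure μ] (c : ℝ) :
    eintegral μ (fun _ => (c : EReal)) = c := by
  have h_parts : ((c.toNNReal : ℝ) : EReal) - (((-c).toNNReal : ℝ) : EReal) = c := by
    rw [← EReal.coe_sub, Real.coe_toNNReal', Real.coe_toNNReal', max_zero_sub_eq_self]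
  simpa [eintegral_eq_sub] using h_parts

lemma eintegral_neg (hg : ∫⁻ x, (g x).toENNReal ∂μ ≠ ⊤ ∨ ∫⁻ x, (-(g x)).toENNReal ∂μ ≠ ⊤) :
    eintegral μ (fun x => -(g x)) = -eintegral μ g := by
  rw [eintegral_eq_sub, eintegral_eq_sub, EReal.neg_sub (.inl (EReal.coe_ennreal_ne_bot _))
    (by simpa using hg), add_comm, ← sub_eq_add_neg]
  simp only [neg_neg]

lemma eintegral_neg_of_le_const [IsFiniteMeasure μ] {c : ℝ} (hg : ∀ x, g x ≤ c) :
    eintegral μ (fun x => -(g x)) = -eintegral μ g := by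
  refine eintegral_neg (.inl (ne_top_of_le_ne_top ?_
    (lintegral_mono fun x => EReal.toENNReal_le_toENNReal (hg x))))
  simp only [EReal.real_coe_toENNReal, lintegral_const]
  finiteness

lemma eintegral_neg_of_nonneg (hg : ∀ x, 0 ≤ g x) :
    eintegral μ (fun x => -(g x)) = -eintegral μ g := by
  have hneg (x : Ω) : (-(g x)).toENNReal = 0 :=
    EReal.toENNReal_of_nonpos (EReal.neg_le_zero.2 (hg x))
  exact eintegral_neg (.inr (by simp [hneg]))

-- If a negative part has infinite integral, then the left side is `⊥`, because `⊤ - ⊤ = ⊥`.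
theorem eintegral_add_le (hg : AEMeasurable g μ) (hh : AEMeasurable h μ) :
    eintegral μ g + eintegral μ h ≤ eintegral μ (fun x => g x + h x) := by
  have hg_pos : AEMeasurable (fun x => (g x).toENNReal) μ := hg.ereal_toENNReal
  have hg_neg : AEMeasurable (fun x => (-(g x)).toENNReal) μ := hg.neg.ereal_toENNReal
  have hh_pos : AEMeasurable (fun x => (h x).toENNReal) μ := hh.ereal_toENNReal
  have hh_neg : AEMeasurable (fun x => (-(h x)).toENNReal) μ := hh.neg.ereal_toENNReal
  have h_neg : ∫⁻ x, (-(g x + h x)).toENNReal ∂μ ≤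
      ∫⁻ x, (-(g x)).toENNReal ∂μ + ∫⁻ x, (-(h x)).toENNReal ∂μ :=
    (lintegral_mono fun x => toENNReal_neg_add_le (g x) (h x)).trans_eq
      (lintegral_add_left' hg_neg _)
  have h_parts : ∫⁻ x, (g x).toENNReal ∂μ + ∫⁻ x, (h x).toENNReal ∂μ +
        ∫⁻ x, (-(g x + h x)).toENNReal ∂μ =
      ∫⁻ x, (g x + h x).toENNReal ∂μ +
        (∫⁻ x, (-(g x)).toENNReal ∂μ + ∫⁻ x, (-(h x)).toENNReal ∂μ) := by
    rw [← lintegral_add_left' hg_pos, ← lintegral_add_left' hg_neg,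
      ← lintegral_add_left' (f := fun x => (g x).toENNReal + (h x).toENNReal) (hg_pos.add hh_pos),
      ← lintegral_add_right' (g := fun x => (-(g x)).toENNReal + (-(h x)).toENNReal) _
        (hg_neg.add hh_neg)]
    exact lintegral_congr fun x => toENNReal_add_add_toENNReal_neg_add _ _
  exact coe_sub_add_coe_sub_le h_parts h_neg

end EIntegral

section Truncation

variable {Ω : Type*}

lemma aemeasurable_truncBelow [MeasurableSpace Ω] {μ : Measure Ω} {g : Ω → EReal}
    (hg : AEMeasurable g μ) (α : ℝ) : AEMeasurable (truncBelow g α) μ :=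
  (Measurable.ite measurableSet_Iic measurable_id measurable_const).comp_aemeasurable hg

lemma aemeasurable_truncAbove [MeasurableSpace Ω] {μ : Measure Ω} {g : Ω → EReal}
    (hg : AEMeasurable g μ) (α : ℝ) : AEMeasurable (truncAbove g α) μ :=
  (Measurable.ite measurableSet_Ici measurable_id measurable_const).comp_aemeasurable hg

lemma max_add_truncBelow_le (g : Ω → EReal) {α : ℝ} (hα : α ≤ 0) (x : Ω) :
    max (g x) α + truncBelow g α x ≤ g x := by
  unfold truncBelow
  split_ifs with h
  · rw [max_eq_right h]
    exact (add_le_add_left (EReal.coe_nonpos.2 hα) _).trans_eq (zero_add _)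
  · rw [max_eq_left (not_le.1 h).le, add_zero]

lemma truncAbove_nonneg (g : Ω → EReal) {α : ℝ} (hα : 0 ≤ α) (x : Ω) : 0 ≤ truncAbove g α x := by
  unfold truncAbove
  split_ifs with h
  · exact (EReal.coe_nonneg.2 hα).trans h
  · exact le_rfl

lemma sub_truncAbove_le_min (g : Ω → EReal) {α : ℝ} (hα : 0 ≤ α) (x : Ω) :
    g x - truncAbove g α x ≤ min (g x) α := by
  unfold truncAbove
  split_ifs with h
  · rw [min_eq_right h]
    exact (EReal.sub_self_le_zero).trans (EReal.coe_nonneg.2 hα)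
  · rw [min_eq_left (not_le.1 h).le, sub_zero]

end Truncation

/-! ### Limits of expectations -/

lemma continuous_toENNReal_sub_coe (c : ℝ) : Continuous fun y : EReal => (y - c).toENNReal := by
  have hsub : Continuous fun y : EReal => y - c := continuous_iff_continuousAt.2 fun y =>
    (EReal.continuousAt_add (p := (y, ((-c : ℝ) : EReal))) (.inr (EReal.coe_ne_bot _))
      (.inr (EReal.coe_ne_top _))).comp (f := fun z : EReal => (z, ((-c : ℝ) : EReal)))
      (by fun_prop)
  exact EReal.continuous_toENNReal.comp hsub

section LimitsOfExpectations

variable {Ω : Type*} [TopologicalSpace Ω] [MeasurableSpace Ω] {μ : Measure Ω}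
  {μs : ℕ → Measure Ω} [IsProbabilityMeasure μ] [∀ n, IsProbabilityMeasure (μs n)]
  {g : Ω → EReal} {G : ℕ → Ω → EReal}

theorem eintegral_le_liminf_of_const_le
    (hopen : ∀ U, IsOpen U → μ U ≤ liminf (fun n => μs n U) atTop)
    (hg : AEMeasurable g μ) (hG : ∀ n, AEMeasurable (G n) (μs n))
    (hlim : ∀ᵐ x ∂μ, g x ≤ liminf (fun p => G p.1 p.2) (atTop ×ˢ 𝓝 x))
    {c : ℝ} (hc : ∀ n x, c ≤ G n x) :
    eintegral μ g ≤ liminf (fun n => eintegral (μs n) (G n)) atTop := by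
  have hshift : Monotone fun y : EReal => (y - c).toENNReal := fun _ _ hyz =>
    EReal.toENNReal_le_toENNReal (EReal.sub_le_sub hyz le_rfl)
  have hfatou : ∫⁻ x, (g x - c).toENNReal ∂μ ≤
      liminf (fun n => ∫⁻ x, (G n x - c).toENNReal ∂(μs n)) atTop :=
    lintegral_le_liminf_lintegral hopen
      (fun n => ((hG n).sub aemeasurable_const).ereal_toENNReal) <| hlim.mono fun x hx =>
        (hshift hx).trans_eq (hshift.map_liminf_of_continuousAt _
          (continuous_toENNReal_sub_coe c).continuousAt)
  have hg_le : eintegral μ g - c ≤ ((∫⁻ x, (g x - c).toENNReal ∂μ : ENNReal) : EReal) :=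
    calc eintegral μ g - c = eintegral μ g + eintegral μ fun _ => ((-c : ℝ) : EReal) := by
          rw [eintegral_const, sub_eq_add_neg, EReal.coe_neg]
      _ ≤ eintegral μ fun x => g x - c := eintegral_add_le hg aemeasurable_const
      _ ≤ _ := eintegral_le_lintegral_toENNReal
  have hG_ge (n : ℕ) : ((∫⁻ x, (G n x - c).toENNReal ∂(μs n) : ENNReal) : EReal) + c ≤
      eintegral (μs n) (G n) :=
    calc _ = (eintegral (μs n) fun x => G n x - c) + eintegral (μs n) fun _ => (c : EReal) := by
          rw [eintegral_of_nonneg fun x => (EReal.sub_nonneg (.inr (EReal.coe_ne_top c))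
            (.inr (EReal.coe_ne_bot c))).2 (hc n x), eintegral_const]
      _ ≤ eintegral (μs n) fun x => G n x - c + c :=
          eintegral_add_le ((hG n).sub aemeasurable_const) aemeasurable_const
      _ = eintegral (μs n) (G n) := by simp only [EReal.sub_add_cancel]
  calc eintegral μ g = eintegral μ g - c + c := EReal.sub_add_cancel.symm
    _ ≤ liminf (fun n => ((∫⁻ x, (G n x - c).toENNReal ∂(μs n) : ENNReal) : EReal)) atTop +
          liminf (fun _ : ℕ => (c : EReal)) atTop := by
        rw [liminf_const]
        refine add_le_add_left (hg_le.trans ?_) _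
        exact (EReal.coe_ennreal_strictMono.monotone hfatou).trans_eq
          (EReal.coe_ennreal_strictMono.monotone.map_liminf_of_continuousAt _
            continuous_coe_ennreal_ereal.continuousAt)
    _ ≤ liminf (fun n => ((∫⁻ x, (G n x - c).toENNReal ∂(μs n) : ENNReal) : EReal) + c) atTop :=
        EReal.le_liminf_add
    _ ≤ liminf (fun n => eintegral (μs n) (G n)) atTop := liminf_le_liminf (.of_forall hG_ge)

theorem limsup_eintegral_le_of_le_const
    (hopen : ∀ U, IsOpen U → μ U ≤ liminf (fun n => μs n U) atTop)
    (hg : AEMeasurable g μ) (hG : ∀ n, AEMeasurable (G n) (μs n))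
    (hlim : ∀ᵐ x ∂μ, limsup (fun p => G p.1 p.2) (atTop ×ˢ 𝓝 x) ≤ g x)
    {c : ℝ} (hgc : ∀ x, g x ≤ c) (hGc : ∀ n x, G n x ≤ c) :
    limsup (fun n => eintegral (μs n) (G n)) atTop ≤ eintegral μ g := by
  have hlim_neg : ∀ᵐ x ∂μ, -(g x) ≤ liminf (fun p => -(G p.1 p.2)) (atTop ×ˢ 𝓝 x) :=
    hlim.mono fun x hx => (EReal.neg_le_neg_iff.2 hx).trans_eq EReal.liminf_neg.symm
  rw [← EReal.neg_le_neg_iff, ← EReal.liminf_neg, ← eintegral_neg_of_le_const hgc]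
  refine (eintegral_le_liminf_of_const_le hopen hg.neg (fun n => (hG n).neg) hlim_neg
    (c := -c) fun n x => EReal.neg_le_neg_iff.2 (hGc n x)).trans_eq ?_
  exact congrArg (liminf · atTop) (funext fun n => eintegral_neg_of_le_const (hGc n))

lemma eintegral_add_liminf_truncBelow_le
    (hopen : ∀ U, IsOpen U → μ U ≤ liminf (fun n => μs n U) atTop)
    (hg : AEMeasurable g μ) (hG : ∀ n, AEMeasurable (G n) (μs n))
    (hlim : ∀ᵐ x ∂μ, g x ≤ liminf (fun p => G p.1 p.2) (atTop ×ˢ 𝓝 x))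
    {α : ℝ} (hα : α ≤ 0) :
    eintegral μ g + liminf (fun n => eintegral (μs n) (truncBelow (G n) α)) atTop ≤
      liminf (fun n => eintegral (μs n) (G n)) atTop := by
  have hmax : ∀ n, AEMeasurable (fun x => max (G n x) α) (μs n) := fun n =>
    (hG n).max aemeasurable_const
  have hlim_max : ∀ᵐ x ∂μ, g x ≤ liminf (fun p => max (G p.1 p.2) (α : EReal)) (atTop ×ˢ 𝓝 x) :=
    hlim.mono fun x hx => hx.trans (liminf_le_liminf (.of_forall fun _ => le_max_left _ _))
  calc _ ≤ liminf (fun n => eintegral (μs n) fun x => max (G n x) α) atTop +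
          liminf (fun n => eintegral (μs n) (truncBelow (G n) α)) atTop :=
        add_le_add_left (eintegral_le_liminf_of_const_le hopen hg hmax hlim_max
          fun n x => le_max_right _ _) _
    _ ≤ liminf (fun n => (eintegral (μs n) fun x => max (G n x) α) +
          eintegral (μs n) (truncBelow (G n) α)) atTop := EReal.le_liminf_add
    _ ≤ liminf (fun n => eintegral (μs n) (G n)) atTop :=
        liminf_le_liminf <| .of_forall fun n =>
          (eintegral_add_le (hmax n) (aemeasurable_truncBelow (hG n) α)).trans
            (eintegral_mono (max_add_truncBelow_le (G n) hα))

lemma limsup_eintegral_sub_limsup_truncAbove_le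
    (hopen : ∀ U, IsOpen U → μ U ≤ liminf (fun n => μs n U) atTop)
    (hg : AEMeasurable g μ) (hG : ∀ n, AEMeasurable (G n) (μs n))
    (hlim : ∀ᵐ x ∂μ, limsup (fun p => G p.1 p.2) (atTop ×ˢ 𝓝 x) ≤ g x)
    {α : ℝ} (hα : 0 ≤ α) :
    limsup (fun n => eintegral (μs n) (G n)) atTop -
        limsup (fun n => eintegral (μs n) (truncAbove (G n) α)) atTop ≤ eintegral μ g := by
  have hlim_min : ∀ᵐ x ∂μ, limsup (fun p => min (G p.1 p.2) (α : EReal)) (atTop ×ˢ 𝓝 x) ≤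
      min (g x) α :=
    hlim.mono fun x hx => le_min
      ((limsup_le_limsup (.of_forall fun _ => min_le_left _ _)).trans hx)
      (limsup_le_of_le (by isBoundedDefault) (.of_forall fun _ => min_le_right _ _))
  have hsub (n : ℕ) : eintegral (μs n) (G n) - eintegral (μs n) (truncAbove (G n) α) ≤
      eintegral (μs n) fun x => min (G n x) α := by
    rw [sub_eq_add_neg, ← eintegral_neg_of_nonneg (truncAbove_nonneg (G n) hα)]
    exact (eintegral_add_le (hG n) (aemeasurable_truncAbove (hG n) α).neg).trans
      (eintegral_mono (sub_truncAbove_le_min (G n) hα))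
  calc _ = limsup (fun n => eintegral (μs n) (G n)) atTop +
          liminf (fun n => -eintegral (μs n) (truncAbove (G n) α)) atTop := by
        rw [sub_eq_add_neg]; exact congrArg _ EReal.liminf_neg.symm
    _ ≤ limsup (fun n => eintegral (μs n) (G n) -
          eintegral (μs n) (truncAbove (G n) α)) atTop := EReal.le_limsup_add
    _ ≤ limsup (fun n => eintegral (μs n) fun x => min (G n x) α) atTop :=
        limsup_le_limsup (.of_forall hsub)
    _ ≤ eintegral μ fun x => min (g x) α :=
        limsup_eintegral_le_of_le_const hopen (hg.min aemeasurable_const)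
          (fun n => (hG n).min aemeasurable_const) hlim_min
          (fun x => min_le_right _ _) fun n x => min_le_right _ _
    _ ≤ eintegral μ g := eintegral_mono fun x => min_le_left _ _

theorem eintegral_le_liminf
    (hopen : ∀ U, IsOpen U → μ U ≤ liminf (fun n => μs n U) atTop)
    (hg : AEMeasurable g μ) (hG : ∀ n, AEMeasurable (G n) (μs n))
    (hlim : ∀ᵐ x ∂μ, g x ≤ liminf (fun p => G p.1 p.2) (atTop ×ˢ 𝓝 x))
    (htail : 0 ≤ liminf (fun α =>
      liminf (fun n => eintegral (μs n) (truncBelow (G n) α)) atTop) atBot) :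
    eintegral μ g ≤ liminf (fun n => eintegral (μs n) (G n)) atTop := by
  calc eintegral μ g ≤ liminf (fun _ : ℝ => eintegral μ g) atBot + liminf (fun α =>
        liminf (fun n => eintegral (μs n) (truncBelow (G n) α)) atTop) atBot := by
        rw [liminf_const]; exact le_add_of_nonneg_right htail
    _ ≤ liminf (fun α => eintegral μ g +
          liminf (fun n => eintegral (μs n) (truncBelow (G n) α)) atTop) atBot :=
        EReal.le_liminf_add
    _ ≤ liminf (fun n => eintegral (μs n) (G n)) atTop :=
        liminf_le_of_frequently_le' <| ((eventually_le_atBot 0).mono fun α hα =>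
          eintegral_add_liminf_truncBelow_le hopen hg hG hlim hα).frequently

theorem limsup_eintegral_le
    (hopen : ∀ U, IsOpen U → μ U ≤ liminf (fun n => μs n U) atTop)
    (hg : AEMeasurable g μ) (hG : ∀ n, AEMeasurable (G n) (μs n))
    (hlim : ∀ᵐ x ∂μ, limsup (fun p => G p.1 p.2) (atTop ×ˢ 𝓝 x) ≤ g x)
    (htail : limsup (fun α =>
      limsup (fun n => eintegral (μs n) (truncAbove (G n) α)) atTop) atTop ≤ 0) :
    limsup (fun n => eintegral (μs n) (G n)) atTop ≤ eintegral μ g := by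
  set L := limsup (fun n => eintegral (μs n) (G n)) atTop
  calc L ≤ liminf (fun _ : ℝ => L) atTop + liminf (fun α =>
        -limsup (fun n => eintegral (μs n) (truncAbove (G n) α)) atTop) atTop := by
        rw [liminf_const]
        refine le_add_of_nonneg_right (le_of_le_of_eq ?_ EReal.liminf_neg.symm)
        simpa only [neg_zero] using EReal.neg_le_neg_iff.2 htail
    _ ≤ liminf (fun α => L -
          limsup (fun n => eintegral (μs n) (truncAbove (G n) α)) atTop) atTop :=
        EReal.le_liminf_add
    _ ≤ eintegral μ g :=
        liminf_le_of_frequently_le' <| ((eventually_ge_atTop 0).mono fun α hα =>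
          limsup_eintegral_sub_limsup_truncAbove_le hopen hg hG hlim hα).frequently

end LimitsOfExpectations

theorem epi_convergence_of_expectations_general {E Ω : Type*} [PseudoMetricSpace E]
    [PseudoMetricSpace Ω] [MeasurableSpace Ω] [OpensMeasurableSpace Ω]
    (X : Set E) (P : Measure Ω) (Pν : ℕ → Measure Ω)
    [IsProbabilityMeasure P] [∀ ν, IsProbabilityMeasure (Pν ν)] (hweak : WeakConv Pν P)
    (f : E → Ω → EReal) (fν : ℕ → E → Ω → EReal)
    (hmeas : ∀ xb ∈ X, AEMeasurable (f xb) P ∧ ∀ ν, AEMeasurable (fν ν xb) (Pν ν))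
    (hinf : ∀ xb ∈ X,
      liminfAlphaBot (fun α =>
        liminfNuX X xb (fun ν x => eintegral (Pν ν) (truncBelow (fν ν x) α))) = 0)
    (hliminf : ∀ xb ∈ X, ∀ᵐ ξb ∂P,
      f xb ξb ≤ liminfNuXXi X xb ξb (fun ν x ξ => fν ν x ξ))
    (hsup : ∀ xb ∈ X, ∃ xs : ℕ → E, (∀ ν, xs ν ∈ X) ∧ Tendsto xs atTop (𝓝 xb) ∧
      limsupAlphaTop (fun α =>
        limsupNu (fun ν => eintegral (Pν ν) (truncAbove (fν ν (xs ν)) α))) = 0 ∧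
      ∀ᵐ ξb ∂P, limsupNuXi ξb (fun ν ξ => fν ν (xs ν) ξ) ≤ f xb ξb) :
    EpiConvergesOn X (fun ν x => eintegral (Pν ν) (fν ν x)) (fun x => eintegral P (f x)) := by
  have hopen (U : Set Ω) (hU : IsOpen U) : P U ≤ liminf (fun ν => Pν ν U) atTop :=
    hweak.measure_isOpen_le_liminf hU
  refine fun xb hxb => ⟨fun zs hzs hlim => ?_, ?_⟩
  · have htail : 0 ≤ liminf (fun α =>
        liminf (fun ν => eintegral (Pν ν) (truncBelow (fν ν (zs ν)) α)) atTop) atBot :=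
      calc 0 = _ := (hinf xb hxb).symm.trans (liminfAlphaBot_eq_liminf _)
        _ ≤ _ := liminf_le_liminf (.of_forall fun α => liminfNuX_le_liminf hzs hlim _)
    exact eintegral_le_liminf hopen (hmeas xb hxb).1 (fun ν => (hmeas _ (hzs ν)).2 ν)
      ((hliminf xb hxb).mono fun ξ hξ => hξ.trans (liminfNuXXi_le_liminf hzs hlim ξ _)) htail
  · obtain ⟨xs, hxs, hlim, htail, hlimsup⟩ := hsup xb hxb
    simp only [limsupAlphaTop_eq_limsup, limsupNu_eq_limsup, limsupNuXi_eq_limsup]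
      at htail hlimsup
    exact ⟨xs, hxs, hlim, limsup_eintegral_le hopen (hmeas xb hxb).1
      (fun ν => (hmeas _ (hxs ν)).2 ν) hlimsup htail.le⟩

/-- Epi-convergence of expectation functions under varying measures and
integrands (Feinberg–Kasyanov–Liang). -/
theorem epi_convergence_of_expectations {n m : ℕ}
    (X : Set (EuclideanSpace ℝ (Fin n))) (hX : IsClosed X)
    (Ξ : Set (EuclideanSpace ℝ (Fin m))) (hΞ : IsClosed Ξ)
    (P : Measure Ξ) (Pν : ℕ → Measure Ξ)
    [IsProbabilityMeasure P] [∀ ν, IsProbabilityMeasure (Pν ν)]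
    (hweak : WeakConv Pν P)
    (f : EuclideanSpace ℝ (Fin n) → Ξ → EReal)
    (fν : ℕ → EuclideanSpace ℝ (Fin n) → Ξ → EReal)
    -- (i) measurability
    (hmeas : ∀ xb ∈ X, Measurable (f xb) ∧ ∀ ν, Measurable (fν ν xb))
    -- (ii) asymptotic inf-integrability and the liminf condition
    (hinf : ∀ xb ∈ X,
      liminfAlphaBot (fun α =>
        liminfNuX X xb (fun ν x => eintegral (Pν ν) (truncBelow (fν ν x) α))) = 0)
    (hliminf : ∀ xb ∈ X, ∀ᵐ ξb ∂P,
      f xb ξb ≤ liminfNuXXi X xb ξb (fun ν x ξ => fν ν x ξ))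
    -- (iii) asymptotic sup-integrability and the limsup condition along some sequence
    (hsup : ∀ xb ∈ X, ∃ xs : ℕ → EuclideanSpace ℝ (Fin n),
      (∀ ν, xs ν ∈ X) ∧ Tendsto xs atTop (𝓝 xb) ∧
      limsupAlphaTop (fun α =>
        limsupNu (fun ν => eintegral (Pν ν) (truncAbove (fν ν (xs ν)) α))) = 0 ∧
      ∀ᵐ ξb ∂P, limsupNuXi ξb (fun ν ξ => fν ν (xs ν) ξ) ≤ f xb ξb) :
    EpiConvergesOn X (fun ν x => eintegral (Pν ν) (fν ν x))
      (fun x => eintegral P (f x)) := by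
  exact epi_convergence_of_expectations_general X P Pν hweak f fν
    (fun xb hxb => ⟨(hmeas xb hxb).1.aemeasurable, fun ν => ((hmeas xb hxb).2 ν).aemeasurable⟩)
    hinf hliminf hsup
end
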